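/- Let P_Δt(q,·) denote the Markov transition kernel on M of the Metropolized Euler–Maruyama scheme (propose q' = q − Δt∇V(q) + √(2Δt)G with G standard Gaussian on ℝⁿ, accept with probability R_Δt(q,q') and project onto M; stay at q upon rejection), and let P̃_Δt(q,·) denote the kernel of the plain Euler–Maruyama scheme (the proposal is always accepted and projected onto M). Then there exist C ≥ 0 and Δt* > 0 such that for all 0 < Δt ≤ Δt* and all q ∈ M, the total variation distance between the ⌊1/Δt⌋-step laws satisfies ‖P_Δt^{⌊1/Δt⌋}(q,·) − P̃_Δt^{⌊1/Δt⌋}(q,·)‖_TV ≤ C √Δt. -/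

import Mathlib

/-!
The two schemes use the same Gaussian proposal and differ only when the proposal is rejected, so for
`|f| ≤ 1` one has `|Pmala f q - Pem f q| ≤ 2 ∫ (1 - R(q, q')) T(q, q') dq'` (`one_step`).

The Metropolis ratio is `e^{-a}` with
`a = V(q') - V(q) - ⟨∇V(q') + ∇V(q), q' - q⟩ / 2 + dt (|∇V(q')|² - |∇V(q)|²) / 4` (`Rk_eq`).
The first part is the error of the trapezoidal rule (`trapezoid`), the second one is controlled by the
Lipschitz constant of `∇V`. The derivatives of the periodic function `V` are bounded
(`periodic_bdd`), hence `1 - R ≤ |a| = O(|q' - q|³ + dt |q' - q|)` (`one_sub_Rk_le`). As `q' - q` is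
of order `√dt` under the proposal, the mean rejection probability is `O(dt^{3/2})` uniformly in `q`
(`rejection_bound`). Both operators are sup-norm contractions, so over `⌊1/dt⌋` steps these errors
add up to `O(√dt)` (`iterate_bound`).
-/

open MeasureTheory RealInnerProductSpace

noncomputable section

abbrev En (n : ℕ) := EuclideanSpace ℝ (Fin n)

/-- Gaussian proposal density of the Euler–Maruyama scheme. -/
def Tker {n : ℕ} (V : En n → ℝ) (dt : ℝ) (q q' : En n) : ℝ :=
  (4 * Real.pi * dt) ^ (-(n : ℝ) / 2) *
    Real.exp (-‖q' - q + dt • gradient V q‖ ^ 2 / (4 * dt))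

/-- Metropolis acceptance probability. -/
def Rk {n : ℕ} (V : En n → ℝ) (dt : ℝ) (q q' : En n) : ℝ :=
  min 1 (Real.exp (-V q') * Tker V dt q' q / (Real.exp (-V q) * Tker V dt q q'))

/-- proposal move -/
def propMove {n : ℕ} (V : En n → ℝ) (dt : ℝ) (q g : En n) : En n :=
  q - dt • gradient V q + Real.sqrt (2 * dt) • g

def xi {n : ℕ} (V : En n → ℝ) (q g : En n) : ℝ :=
  -(Real.sqrt 2 / 6) * iteratedFDeriv ℝ 3 V q (fun _ => g) +
    (Real.sqrt 2 / 2) * ⟪gradient V q, fderiv ℝ (gradient V) q g⟫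

def xiPlus {n : ℕ} (V : En n → ℝ) (q g : En n) : ℝ := max (xi V q g) 0

/-- standard Gaussian measure on ℝⁿ -/
def gauss (n : ℕ) : Measure (En n) :=
  volume.withDensity fun g =>
    ENNReal.ofReal ((2 * Real.pi) ^ (-(n : ℝ) / 2) * Real.exp (-‖g‖ ^ 2 / 2))

/-- fundamental domain of the torus -/
def Box (n : ℕ) (L : ℝ) : Set (En n) := {q | ∀ i, q i ∈ Set.Ico (0 : ℝ) L}

/-- integral with respect to the Gibbs measure μ on the torus M -/
def muInt {n : ℕ} (V : En n → ℝ) (L : ℝ) (f : En n → ℝ) : ℝ :=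
  (∫ q in Box n L, Real.exp (-V q))⁻¹ * ∫ q in Box n L, f q * Real.exp (-V q)

/-- Laplacian -/
def lap {n : ℕ} (ψ : En n → ℝ) (q : En n) : ℝ :=
  ∑ i, iteratedFDeriv ℝ 2 ψ q (fun _ => EuclideanSpace.single i (1 : ℝ))

/-- generator of the overdamped Langevin dynamics -/
def gen {n : ℕ} (V ψ : En n → ℝ) (q : En n) : ℝ :=
  -⟪gradient V q, gradient ψ q⟫ + lap ψ q

/-- MALA transition operator on periodic functions -/
def Pmala {n : ℕ} (V : En n → ℝ) (dt : ℝ) (f : En n → ℝ) (q : En n) : ℝ :=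
  f q + ∫ q', Rk V dt q q' * Tker V dt q q' * (f q' - f q)

/-- the operator D₁ -/
def D1op {n : ℕ} (V ψ : En n → ℝ) (q : En n) : ℝ :=
  2 * ∑ i, ∑ j, (iteratedFDeriv ℝ 2 V q ![EuclideanSpace.single i (1:ℝ), EuclideanSpace.single j (1:ℝ)]) *
      (iteratedFDeriv ℝ 2 ψ q ![EuclideanSpace.single i (1:ℝ), EuclideanSpace.single j (1:ℝ)])
    + ⟪gradient (fun x => lap V x) q, gradient ψ q⟫
    - ⟪gradient V q, fderiv ℝ (gradient V) q (gradient ψ q)⟫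

/-- the operator D₂ -/
def D2op {n : ℕ} (V ψ : En n → ℝ) (q : En n) : ℝ :=
  -Real.sqrt 2 * ⟪∫ g, xiPlus V q g • g ∂(gauss n), gradient ψ q⟫

/-- the operator A appearing in the expansion of the MALA evolution operator -/
def Aop {n : ℕ} (V ψ : En n → ℝ) (q : En n) : ℝ :=
  (gen V (gen V ψ) q + D1op V ψ q + D2op V ψ q) / 2

/-- Metropolized increment -/
def deltaInc {n : ℕ} (V : En n → ℝ) (dt : ℝ) (q g : En n) (u : ℝ) : En n :=
  if u ≤ Rk V dt q (propMove V dt q g) then (-dt) • gradient V q + Real.sqrt (2 * dt) • g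
  else 0

/-- expectation over G (std Gaussian) and U (uniform on [0,1]) of the increment -/
def EguDelta {n : ℕ} (V : En n → ℝ) (dt : ℝ) (q : En n) : En n :=
  ∫ g, (∫ u in Set.Icc (0 : ℝ) 1, deltaInc V dt q g u) ∂(gauss n)


/-- evolution operator of the plain (un-Metropolized) Euler–Maruyama scheme -/
def Pem {n : ℕ} (V : En n → ℝ) (dt : ℝ) (f : En n → ℝ) (q : En n) : ℝ :=
  ∫ q', Tker V dt q q' * f q'


section Bounds

-- needed for the norm on triply nested spaces of continuous linear maps
set_option maxSynthPendingDepth 3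

/-! ### Bounds on periodic functions -/

/-- A continuous function on `ℝⁿ` that is `L`-periodic in each coordinate is bounded: every point is
a lattice translate of a point of the compact cube `[0, L]ⁿ`. -/
lemma periodic_bdd {n : ℕ} {L : ℝ} (hL : 0 < L) {F : Type*} [NormedAddCommGroup F]
    (f : En n → F) (hf : Continuous f)
    (hper : ∀ i : Fin n, Function.Periodic f (L • EuclideanSpace.single i (1 : ℝ))) :
    ∃ B : ℝ, ∀ x, ‖f x‖ ≤ B := by
  have hc : IsCompact ((WithLp.toLp 2 : (Fin n → ℝ) → En n) ''
      Set.pi Set.univ (fun _ => Set.Icc (0 : ℝ) L)) :=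
    (isCompact_univ_pi fun _ => isCompact_Icc).image (PiLp.continuous_toLp 2 _)
  obtain ⟨B, hB⟩ := hc.exists_bound_of_continuousOn hf.continuousOn
  refine ⟨B, fun x => ?_⟩
  have hsum : ∀ (k : Fin n → ℤ) (s : Finset (Fin n)),
      Function.Periodic f (∑ i ∈ s, k i • (L • EuclideanSpace.single i (1 : ℝ) : En n)) := by
    intro k s
    induction s using Finset.induction_on with
    | empty => intro y; simp
    | insert a s ha ih =>
      rw [Finset.sum_insert ha]
      exact ((hper a).zsmul (k a)).add_period ih
  have h := hsum (fun i => -⌊x i / L⌋) Finset.univ x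
  rw [← h]
  refine hB _ ⟨fun i => x i - ⌊x i / L⌋ * L, fun i _ => ?_, ?_⟩
  · have h1 := Int.floor_le (x i / L)
    have h2 := Int.lt_floor_add_one (x i / L)
    rw [le_div_iff₀ hL] at h1
    rw [div_lt_iff₀ hL] at h2
    constructor <;> linarith
  · ext j
    simp [Pi.single_apply, sub_eq_add_neg, mul_comm]

lemma periodic_fderiv {E F : Type*} [NormedAddCommGroup E] [NormedSpace ℝ E]
    [NormedAddCommGroup F] [NormedSpace ℝ F] {f : E → F} {c : E}
    (h : Function.Periodic f c) : Function.Periodic (fderiv ℝ f) c := by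
  intro x
  have hshift : (fun y => f (y + c)) = f := funext h
  rw [← fderiv_comp_add_right, hshift]

/-- Error of the trapezoidal rule along the segment from `q` to `q + d`, controlled by a bound on the
third derivative. -/
lemma trapezoid {E : Type*} [NormedAddCommGroup E] [NormedSpace ℝ E] {V : E → ℝ}
    (hV : ContDiff ℝ (⊤ : ℕ∞) V) {K : ℝ}
    (hK : ∀ x, ‖fderiv ℝ (fderiv ℝ (fderiv ℝ V)) x‖ ≤ K) (q d : E) :
    |V (q + d) - V q - (fderiv ℝ V (q + d) d + fderiv ℝ V q d) / 2| ≤ K * ‖d‖ ^ 3 := by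
  have hV1 : ContDiff ℝ (⊤ : ℕ∞) (fderiv ℝ V) := hV.fderiv_right (by norm_cast)
  have hV2 : ContDiff ℝ (⊤ : ℕ∞) (fderiv ℝ (fderiv ℝ V)) := hV1.fderiv_right (by norm_cast)
  have hK0 : 0 ≤ K := (norm_nonneg _).trans (hK q)
  set F1 := fderiv ℝ V with hF1
  set F2 := fderiv ℝ F1 with hF2
  have hline : ∀ t : ℝ, HasDerivAt (fun t : ℝ => q + t • d) d t := fun t => by
    simpa using ((hasDerivAt_id t).smul_const d).const_add q
  have d0 : ∀ t : ℝ, HasDerivAt (fun t : ℝ => V (q + t • d)) (F1 (q + t • d) d) t := fun t =>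
    ((hV.differentiable (by simp)) _).hasFDerivAt.comp_hasDerivAt t (hline t)
  have d1 : ∀ t : ℝ, HasDerivAt (fun t : ℝ => F1 (q + t • d) d) (F2 (q + t • d) d d) t := by
    intro t
    have h := ((hV1.differentiable (by simp)) (q + t • d)).hasFDerivAt.comp_hasDerivAt t (hline t)
    simpa using h.clm_apply (hasDerivAt_const t d)
  have lip : ∀ x y, ‖F2 x - F2 y‖ ≤ K * ‖x - y‖ := fun x y =>
    convex_univ.norm_image_sub_le_of_norm_fderiv_le (𝕜 := ℝ)
      (fun z _ => hV2.differentiable (by simp) z) (fun z _ => hK z) (Set.mem_univ y)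
      (Set.mem_univ x)
  have lip2 : ∀ s ∈ Set.Icc (0 : ℝ) 1, ∀ t ∈ Set.Icc (0 : ℝ) 1,
      ‖F2 (q + s • d) d d - F2 (q + t • d) d d‖ ≤ K * ‖d‖ ^ 3 := by
    intro s hs t ht
    have hst : |s - t| ≤ 1 := abs_sub_le_iff.2 ⟨by linarith [hs.2, ht.1], by linarith [hs.1, ht.2]⟩
    have h1 : ‖F2 (q + s • d) - F2 (q + t • d)‖ ≤ K * ‖d‖ := by
      refine (lip _ _).trans ?_
      have : q + s • d - (q + t • d) = (s - t) • d := by module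
      rw [this, norm_smul, Real.norm_eq_abs]
      have := mul_le_mul_of_nonneg_right hst (norm_nonneg d)
      nlinarith
    calc ‖F2 (q + s • d) d d - F2 (q + t • d) d d‖
        = ‖(F2 (q + s • d) - F2 (q + t • d)) d d‖ := by simp
      _ ≤ ‖F2 (q + s • d) - F2 (q + t • d)‖ * ‖d‖ * ‖d‖ :=
          ContinuousLinearMap.le_opNorm₂ _ _ _
      _ ≤ K * ‖d‖ * ‖d‖ * ‖d‖ := by gcongr
      _ = K * ‖d‖ ^ 3 := by ring
  have z01 : (0 : ℝ) ∈ Set.Icc (0 : ℝ) 1 := by simp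
  have o01 : (1 : ℝ) ∈ Set.Icc (0 : ℝ) 1 := by simp
  have hM : 0 ≤ K * ‖d‖ ^ 3 := by positivity
  have step1 : ∀ t ∈ Set.Icc (0 : ℝ) 1,
      |F1 (q + t • d) d - F1 q d - t * F2 (q + t • d) d d| ≤ K * ‖d‖ ^ 3 := by
    intro t ht
    have h := (convex_Icc (0 : ℝ) 1).norm_image_sub_le_of_norm_hasDerivWithin_le
      (f := fun s : ℝ => F1 (q + s • d) d - s * F2 (q + t • d) d d)
      (f' := fun s => F2 (q + s • d) d d - F2 (q + t • d) d d)
      (fun s _ => by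
        have h2 := (d1 s).sub ((hasDerivAt_id s).mul_const (F2 (q + t • d) d d))
        rw [one_mul] at h2
        exact h2.hasDerivWithinAt)
      (fun s hs => lip2 s hs t ht) z01 ht
    have e : F1 (q + t • d) d - F1 q d - t * F2 (q + t • d) d d =
        F1 (q + t • d) d - t * F2 (q + t • d) d d
          - (F1 (q + (0 : ℝ) • d) d - 0 * F2 (q + t • d) d d) := by simp; ring
    rw [e, ← Real.norm_eq_abs]
    refine h.trans (mul_le_of_le_one_right hM ?_)
    rw [sub_zero, Real.norm_eq_abs, abs_of_nonneg ht.1]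
    exact ht.2
  have h := (convex_Icc (0 : ℝ) 1).norm_image_sub_le_of_norm_hasDerivWithin_le
    (f := fun t : ℝ => V (q + t • d) - t * ((F1 (q + t • d) d + F1 q d) / 2))
    (f' := fun t => (F1 (q + t • d) d - F1 q d - t * F2 (q + t • d) d d) / 2)
    (C := K * ‖d‖ ^ 3)
    (fun t _ => by
      have h2 := (d0 t).sub ((hasDerivAt_id t).mul (((d1 t).add_const (F1 q d)).div_const 2))
      refine (h2.congr_deriv ?_).hasDerivWithinAt
      simp only [id]
      ring)
    (fun t ht => by
      rw [norm_div, Real.norm_eq_abs, Real.norm_eq_abs, abs_two]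
      linarith [step1 t ht]) z01 o01
  simp only [one_smul, zero_smul, add_zero, one_mul, zero_mul, sub_zero, norm_one, mul_one] at h
  rw [← Real.norm_eq_abs]
  refine le_of_eq_of_le (congrArg norm ?_) h
  ring

/-! ### The Gaussian proposal kernel -/

lemma gauss_integral {n : ℕ} {b : ℝ} (hb : 0 < b) (c : En n) :
    Integrable (fun x : En n => Real.exp (-b * ‖x + c‖ ^ 2)) ∧
      ∫ x : En n, Real.exp (-b * ‖x + c‖ ^ 2) = (Real.pi / b) ^ ((n : ℝ) / 2) := by
  have h : ∫ x : En n, Real.exp (-b * ‖x + c‖ ^ 2) = (Real.pi / b) ^ ((n : ℝ) / 2) := by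
    rw [integral_add_right_eq_self (fun x : En n => Real.exp (-b * ‖x‖ ^ 2)) c,
      GaussianFourier.integral_rexp_neg_mul_sq_norm hb]
    simp
  refine ⟨Integrable.of_integral_ne_zero ?_, h⟩
  rw [h]
  positivity

lemma Tker_pos {n : ℕ} (V : En n → ℝ) {dt : ℝ} (hdt : 0 < dt) (q q' : En n) :
    0 < Tker V dt q q' := by
  unfold Tker
  positivity

lemma Tker_eq {n : ℕ} (V : En n → ℝ) (dt : ℝ) (q q' : En n) :
    Tker V dt q q' = (4 * Real.pi * dt) ^ (-(n : ℝ) / 2) *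
      Real.exp (-(1 / (4 * dt)) * ‖q' + (-q + dt • gradient V q)‖ ^ 2) := by
  unfold Tker
  rw [show q' - q + dt • gradient V q = q' + (-q + dt • gradient V q) by abel]
  congr 2
  ring

lemma Tker_integral {n : ℕ} (V : En n → ℝ) {dt : ℝ} (hdt : 0 < dt) (q : En n) :
    Integrable (Tker V dt q) ∧ ∫ q', Tker V dt q q' = 1 := by
  obtain ⟨h1, h2⟩ := gauss_integral (n := n) (b := 1 / (4 * dt)) (by positivity)
    (-q + dt • gradient V q)
  have e : Tker V dt q = _ := funext (Tker_eq V dt q)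
  rw [e]
  refine ⟨h1.const_mul _, ?_⟩
  rw [integral_const_mul, h2, show Real.pi / (1 / (4 * dt)) = 4 * Real.pi * dt by field_simp,
    ← Real.rpow_add (by positivity), show -(n : ℝ) / 2 + n / 2 = 0 by ring, Real.rpow_zero]

lemma Rk_nonneg {n : ℕ} (V : En n → ℝ) {dt : ℝ} (hdt : 0 < dt) (q q' : En n) :
    0 ≤ Rk V dt q q' := by
  have := Tker_pos V hdt q q'
  have := Tker_pos V hdt q' q
  unfold Rk
  positivity

lemma Rk_le_one {n : ℕ} (V : En n → ℝ) (dt : ℝ) (q q' : En n) : Rk V dt q q' ≤ 1 :=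
  min_le_left _ _

/-- The log-ratio in the Metropolis rule is a trapezoidal error plus `dt` times an increment of
`|∇V|²`; the terms of lower order cancel. -/
lemma Rk_eq {n : ℕ} (V : En n → ℝ) {dt : ℝ} (hdt : 0 < dt) (q q' : En n) :
    Rk V dt q q' = min 1 (Real.exp (-(V q' - V q
      - (⟪gradient V q', q' - q⟫ + ⟪gradient V q, q' - q⟫) / 2
      + dt / 4 * (‖gradient V q'‖ ^ 2 - ‖gradient V q‖ ^ 2)))) := by
  unfold Rk Tker
  congr 1
  have hc : (4 * Real.pi * dt) ^ (-(n : ℝ) / 2) ≠ 0 := by positivity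
  rw [mul_left_comm, mul_left_comm (Real.exp (-V q)), mul_div_mul_left _ _ hc, ← Real.exp_add,
    ← Real.exp_add, ← Real.exp_sub]
  congr 1
  set a := gradient V q
  set b := gradient V q'
  have e1 : ‖q - q' + dt • b‖ ^ 2 = ‖q' - q‖ ^ 2 - 2 * dt * ⟪b, q' - q⟫ + dt ^ 2 * ‖b‖ ^ 2 := by
    rw [show q - q' + dt • b = dt • b - (q' - q) by abel, norm_sub_sq_real, real_inner_smul_left,
      norm_smul, Real.norm_eq_abs, mul_pow, sq_abs]
    ring
  have e2 : ‖q' - q + dt • a‖ ^ 2 = ‖q' - q‖ ^ 2 + 2 * dt * ⟪a, q' - q⟫ + dt ^ 2 * ‖a‖ ^ 2 := by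
    rw [add_comm, norm_add_sq_real, real_inner_smul_left,
      norm_smul, Real.norm_eq_abs, mul_pow, sq_abs]
    ring
  rw [e1, e2]
  field_simp
  ring

/-- The rejection probability is at most the absolute value of the log-ratio, hence of order
`|q' - q|³ + dt |q' - q|`. -/
lemma one_sub_Rk_le {n : ℕ} {V : En n → ℝ} (hV : ContDiff ℝ (⊤ : ℕ∞) V) {B1 B2 B3 : ℝ}
    (h1 : ∀ x, ‖fderiv ℝ V x‖ ≤ B1) (h2 : ∀ x, ‖fderiv ℝ (fderiv ℝ V) x‖ ≤ B2)
    (h3 : ∀ x, ‖fderiv ℝ (fderiv ℝ (fderiv ℝ V)) x‖ ≤ B3) {dt : ℝ} (hdt : 0 < dt)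
    (q q' : En n) :
    1 - Rk V dt q q' ≤ B3 * ‖q' - q‖ ^ 3 + dt * (B1 * B2 * ‖q' - q‖) := by
  have hV1 : ContDiff ℝ (⊤ : ℕ∞) (fderiv ℝ V) := hV.fderiv_right (by norm_cast)
  have hB1 : 0 ≤ B1 := (norm_nonneg _).trans (h1 q)
  have hB2 : 0 ≤ B2 := (norm_nonneg _).trans (h2 q)
  have hg : ∀ x, ‖gradient V x‖ = ‖fderiv ℝ V x‖ := fun x => by simp [gradient]
  have ht := trapezoid hV h3 q (q' - q)
  rw [add_sub_cancel, ← inner_gradient_left, ← inner_gradient_left] at ht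
  have hl : ‖fderiv ℝ V q' - fderiv ℝ V q‖ ≤ B2 * ‖q' - q‖ :=
    convex_univ.norm_image_sub_le_of_norm_fderiv_le (𝕜 := ℝ)
      (fun z _ => hV1.differentiable (by simp) z) (fun z _ => h2 z) (Set.mem_univ _)
      (Set.mem_univ _)
  have hsq : |‖gradient V q'‖ ^ 2 - ‖gradient V q‖ ^ 2| ≤ 2 * B1 * (B2 * ‖q' - q‖) := by
    rw [hg, hg, sq_sub_sq, abs_mul]
    refine mul_le_mul ?_ ((abs_norm_sub_norm_le _ _).trans hl) (abs_nonneg _) (by positivity)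
    rw [abs_of_nonneg (by positivity)]
    linarith [h1 q, h1 q']
  rw [Rk_eq V hdt]
  set t := V q' - V q - (⟪gradient V q', q' - q⟫ + ⟪gradient V q, q' - q⟫) / 2
  set s := ‖gradient V q'‖ ^ 2 - ‖gradient V q‖ ^ 2
  have hs : dt / 4 * s ≤ dt * (B1 * B2 * ‖q' - q‖) := by
    have := mul_le_mul_of_nonneg_left ((le_abs_self s).trans hsq) hdt.le
    have : 0 ≤ dt * (B1 * B2 * ‖q' - q‖) := by positivity
    linarith
  have hpos : 0 ≤ B3 * ‖q' - q‖ ^ 3 + dt * (B1 * B2 * ‖q' - q‖) :=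
    add_nonneg ((abs_nonneg _).trans ht) (by positivity)
  have hexp := Real.add_one_le_exp (-(t + dt / 4 * s))
  have := (le_abs_self t).trans ht
  rcases min_choice 1 (Real.exp (-(t + dt / 4 * s))) with h | h <;> rw [h] <;> linarith

/-- Polynomial growth is absorbed by widening the Gaussian. -/
lemma cube_le_exp {c u : ℝ} (hc : 1 ≤ c) (hu : 0 ≤ u) :
    (c + u) ^ 3 ≤ c ^ 3 * Real.exp 18 * Real.exp (u ^ 2 / 8) := by
  have h1 : c + u ≤ c * Real.exp u := by nlinarith [Real.add_one_le_exp u]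
  calc (c + u) ^ 3 ≤ (c * Real.exp u) ^ 3 := by gcongr
    _ = c ^ 3 * Real.exp (3 * u) := by rw [mul_pow, ← Real.exp_nat_mul]; norm_num
    _ ≤ c ^ 3 * Real.exp (18 + u ^ 2 / 8) := by
        gcongr
        nlinarith [sq_nonneg (u - 12)]
    _ = _ := by rw [Real.exp_add]; ring

/-- The mean rejection probability is `O(dt^{3/2})`, uniformly in the starting point. -/
lemma rejection_bound {n : ℕ} {V : En n → ℝ} (hV : ContDiff ℝ (⊤ : ℕ∞) V) {B1 B2 B3 : ℝ}
    (h1 : ∀ x, ‖fderiv ℝ V x‖ ≤ B1) (h2 : ∀ x, ‖fderiv ℝ (fderiv ℝ V) x‖ ≤ B2)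
    (h3 : ∀ x, ‖fderiv ℝ (fderiv ℝ (fderiv ℝ V)) x‖ ≤ B3) :
    ∃ C ≥ (0 : ℝ), ∀ dt : ℝ, 0 < dt → dt ≤ 1 → ∀ q : En n,
      ∫ q', (1 - Rk V dt q q') * Tker V dt q q' ≤ C * (dt * Real.sqrt dt) := by
  have hB1 : 0 ≤ B1 := (norm_nonneg _).trans (h1 0)
  have hB2 : 0 ≤ B2 := (norm_nonneg _).trans (h2 0)
  have hB3 : 0 ≤ B3 := (norm_nonneg _).trans (h3 0)
  set A := (B3 + B1 * B2) * ((B1 + 1) ^ 3 * Real.exp 18) with hA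
  refine ⟨A * 2 ^ ((n : ℝ) / 2), by positivity, fun dt hdt hdt1 q => ?_⟩
  set r := Real.sqrt dt with hr
  have hr0 : 0 < r := Real.sqrt_pos.2 hdt
  have hr2 : r ^ 2 = dt := Real.sq_sqrt hdt.le
  have hr1 : r ≤ 1 := Real.sqrt_le_one.2 hdt1
  set c : En n := -q + dt • gradient V q with hc
  obtain ⟨g1, g2⟩ := gauss_integral (n := n) (b := 1 / (8 * dt)) (by positivity) c
  set Z := (4 * Real.pi * dt) ^ (-(n : ℝ) / 2) with hZ
  have hZ0 : 0 < Z := by positivity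
  have key : ∀ q', (1 - Rk V dt q q') * Tker V dt q q' ≤
      A * (dt * r) * Z * Real.exp (-(1 / (8 * dt)) * ‖q' + c‖ ^ 2) := by
    intro q'
    set u := ‖q' + c‖ / r with hu
    have hu0 : 0 ≤ u := by positivity
    have hur : ‖q' + c‖ = r * u := by rw [hu]; field_simp
    have hd : ‖q' - q‖ ≤ r * (B1 + 1 + u) := by
      have e : q' - q = (q' + c) - dt • gradient V q := by rw [hc]; abel
      have hg : ‖gradient V q‖ ≤ B1 := by simpa [gradient] using h1 q
      calc ‖q' - q‖ ≤ ‖q' + c‖ + ‖dt • gradient V q‖ := by rw [e]; exact norm_sub_le _ _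
        _ = r * u + r * (r * ‖gradient V q‖) := by
            rw [norm_smul, Real.norm_eq_abs, abs_of_pos hdt, hur, ← hr2]; ring
        _ ≤ r * u + r * (1 * B1) := by gcongr
        _ ≤ r * (B1 + 1 + u) := by nlinarith
    set w := B1 + 1 + u with hw
    have hw1 : 1 ≤ w := by linarith
    have hR : 1 - Rk V dt q q' ≤ A * (dt * r) * Real.exp (u ^ 2 / 8) := by
      calc 1 - Rk V dt q q' ≤ B3 * ‖q' - q‖ ^ 3 + dt * (B1 * B2 * ‖q' - q‖) :=
            one_sub_Rk_le hV h1 h2 h3 hdt q q'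
        _ ≤ B3 * (r * w) ^ 3 + dt * (B1 * B2 * (r * w)) := by gcongr
        _ = dt * r * (B3 * w ^ 3 + B1 * B2 * w) := by rw [← hr2]; ring
        _ ≤ dt * r * (B3 * w ^ 3 + B1 * B2 * w ^ 3) := by
            gcongr
            exact le_self_pow₀ hw1 (by norm_num)
        _ = (B3 + B1 * B2) * (dt * r) * w ^ 3 := by ring
        _ ≤ (B3 + B1 * B2) * (dt * r) *
              ((B1 + 1) ^ 3 * Real.exp 18 * Real.exp (u ^ 2 / 8)) := by
            gcongr
            exact cube_le_exp (by linarith) hu0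
        _ = _ := by rw [hA]; ring
    calc (1 - Rk V dt q q') * Tker V dt q q'
        ≤ A * (dt * r) * Real.exp (u ^ 2 / 8) * Tker V dt q q' := by
          have := (Tker_pos V hdt q q').le
          gcongr
      _ = A * (dt * r) * Z *
          (Real.exp (u ^ 2 / 8) * Real.exp (-(1 / (4 * dt)) * ‖q' + c‖ ^ 2)) := by
          rw [Tker_eq]; ring
      _ = _ := by
          rw [← Real.exp_add, hur, ← hr2]
          congr 2
          field_simp
          ring
  calc ∫ q', (1 - Rk V dt q q') * Tker V dt q q'
      ≤ ∫ q', A * (dt * r) * Z * Real.exp (-(1 / (8 * dt)) * ‖q' + c‖ ^ 2) := by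
        refine integral_mono_of_nonneg (.of_forall fun q' => ?_) (g1.const_mul _)
          (.of_forall key)
        exact mul_nonneg (sub_nonneg.2 (Rk_le_one V dt q q')) (Tker_pos V hdt q q').le
    _ = A * 2 ^ ((n : ℝ) / 2) * (dt * r) := by
        rw [integral_const_mul, g2,
          show Real.pi / (1 / (8 * dt)) = 2 * (4 * Real.pi * dt) by field_simp; norm_num,
          Real.mul_rpow (by norm_num) (by positivity)]
        have : Z * (4 * Real.pi * dt) ^ ((n : ℝ) / 2) = 1 := by
          rw [hZ, ← Real.rpow_add (by positivity), show -(n : ℝ) / 2 + n / 2 = 0 by ring,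
            Real.rpow_zero]
        linear_combination A * (dt * r) * 2 ^ ((n : ℝ) / 2) * this

/-- `rejection_bound` for periodic `V`, whose derivatives are bounded. -/
lemma rejection_bound_periodic {n : ℕ} {L : ℝ} (hL : 0 < L) {V : En n → ℝ}
    (hV : ContDiff ℝ (⊤ : ℕ∞) V)
    (hper : ∀ (q : En n) (i : Fin n), V (q + L • EuclideanSpace.single i (1 : ℝ)) = V q) :
    ∃ C ≥ (0 : ℝ), ∀ dt : ℝ, 0 < dt → dt ≤ 1 → ∀ q : En n,
      ∫ q', (1 - Rk V dt q q') * Tker V dt q q' ≤ C * (dt * Real.sqrt dt) := by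
  have hV1 : ContDiff ℝ (⊤ : ℕ∞) (fderiv ℝ V) := hV.fderiv_right (by norm_cast)
  have hV2 : ContDiff ℝ (⊤ : ℕ∞) (fderiv ℝ (fderiv ℝ V)) := hV1.fderiv_right (by norm_cast)
  have hp : ∀ i : Fin n, Function.Periodic V (L • EuclideanSpace.single i (1 : ℝ)) :=
    fun i q => hper q i
  obtain ⟨B1, h1⟩ := periodic_bdd hL (fderiv ℝ V) hV1.continuous fun i => periodic_fderiv (hp i)
  obtain ⟨B2, h2⟩ := periodic_bdd hL (fderiv ℝ (fderiv ℝ V)) hV2.continuous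
    fun i => periodic_fderiv (periodic_fderiv (hp i))
  obtain ⟨B3, h3⟩ := periodic_bdd hL (fderiv ℝ (fderiv ℝ (fderiv ℝ V)))
    (hV2.continuous_fderiv (by simp))
    fun i => periodic_fderiv (periodic_fderiv (periodic_fderiv (hp i)))
  exact rejection_bound hV h1 h2 h3

end Bounds

/-! ### One-step comparison -/

lemma continuous_gradient {n : ℕ} {V : En n → ℝ} (hV : ContDiff ℝ (⊤ : ℕ∞) V) :
    Continuous (gradient V) :=
  (InnerProductSpace.toDual ℝ (En n)).symm.continuous.comp (hV.continuous_fderiv (by simp))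

lemma measurable_Tker {n : ℕ} {V : En n → ℝ} (hV : ContDiff ℝ (⊤ : ℕ∞) V) (dt : ℝ) :
    Measurable (fun p : En n × En n => Tker V dt p.1 p.2) := by
  have := continuous_gradient hV
  unfold Tker
  refine Continuous.measurable ?_
  fun_prop

lemma measurable_Rk {n : ℕ} {V : En n → ℝ} (hV : ContDiff ℝ (⊤ : ℕ∞) V) (dt : ℝ) :
    Measurable (fun p : En n × En n => Rk V dt p.1 p.2) := by
  have h1 := measurable_Tker hV dt
  have h2 := h1.comp measurable_swap
  have h3 := hV.continuous.measurable
  simp only [Function.comp_def, Prod.fst_swap, Prod.snd_swap] at h2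
  unfold Rk
  fun_prop

lemma measurable_Pmala {n : ℕ} {V : En n → ℝ} (hV : ContDiff ℝ (⊤ : ℕ∞) V) (dt : ℝ)
    {f : En n → ℝ} (hf : Measurable f) : Measurable (Pmala V dt f) := by
  have h1 := measurable_Tker hV dt
  have h2 := measurable_Rk hV dt
  have h : Measurable (fun p : En n × En n =>
      Rk V dt p.1 p.2 * Tker V dt p.1 p.2 * (f p.2 - f p.1)) := by fun_prop
  exact hf.add h.stronglyMeasurable.integral_prod_right.measurable

lemma measurable_Pem {n : ℕ} {V : En n → ℝ} (hV : ContDiff ℝ (⊤ : ℕ∞) V) (dt : ℝ)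
    {f : En n → ℝ} (hf : Measurable f) : Measurable (Pem V dt f) := by
  have h1 := measurable_Tker hV dt
  have h : Measurable (fun p : En n × En n => Tker V dt p.1 p.2 * f p.2) := by fun_prop
  exact h.stronglyMeasurable.integral_prod_right.measurable

/-- Bounded measurable functions are integrable against the proposal density. -/
lemma integrable_mul_Tker {n : ℕ} (V : En n → ℝ) {dt : ℝ} (hdt : 0 < dt) (q : En n)
    {g : En n → ℝ} (hg : Measurable g) {c : ℝ} (hc : ∀ x, |g x| ≤ c) :
    Integrable (fun q' => Tker V dt q q' * g q') :=
  (Tker_integral V hdt q).1.mul_bdd hg.aestronglyMeasurable (.of_forall hc)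

lemma abs_integral_Tker_le {n : ℕ} (V : En n → ℝ) {dt : ℝ} (hdt : 0 < dt) (q : En n)
    {g : En n → ℝ} {c : ℝ} (hc : ∀ x, |g x| ≤ c) :
    |∫ q', Tker V dt q q' * g q'| ≤ c := by
  obtain ⟨hT, hT1⟩ := Tker_integral V hdt q
  calc |∫ q', Tker V dt q q' * g q'| ≤ ∫ q', Tker V dt q q' * c := by
        rw [← Real.norm_eq_abs]
        refine norm_integral_le_of_norm_le (hT.mul_const c) (.of_forall fun q' => ?_)
        rw [Real.norm_eq_abs, abs_mul, abs_of_pos (Tker_pos V hdt q q')]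
        exact mul_le_mul_of_nonneg_left (hc q') (Tker_pos V hdt q q').le
    _ = c := by rw [integral_mul_const, hT1, one_mul]

/-- The Metropolized kernel averages `f` over accepted proposals and `f q` over rejected ones. -/
lemma Pmala_eq {n : ℕ} {V : En n → ℝ} (hV : ContDiff ℝ (⊤ : ℕ∞) V) {dt : ℝ} (hdt : 0 < dt)
    {f : En n → ℝ} (hf : Measurable f) (hb : ∀ x, |f x| ≤ 1) (q : En n) :
    Pmala V dt f q =
      ∫ q', Tker V dt q q' * (Rk V dt q q' * f q' + (1 - Rk V dt q q') * f q) := by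
  obtain ⟨hT, hT1⟩ := Tker_integral V hdt q
  have hRm : Measurable (Rk V dt q) := (measurable_Rk hV dt).comp measurable_prodMk_left
  have hi : Integrable (fun q' => Tker V dt q q' * (Rk V dt q q' * (f q' - f q))) := by
    refine integrable_mul_Tker V hdt q (by fun_prop) (c := 1 * 2) fun x => ?_
    rw [abs_mul, abs_of_nonneg (Rk_nonneg V hdt q x)]
    refine mul_le_mul (Rk_le_one V dt q x) ?_ (abs_nonneg _) zero_le_one
    exact (abs_sub _ _).trans (by linarith [hb x, hb q])
  have e : ∀ q', Tker V dt q q' * (Rk V dt q q' * f q' + (1 - Rk V dt q q') * f q) =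
      Tker V dt q q' * f q + Tker V dt q q' * (Rk V dt q q' * (f q' - f q)) := fun q' => by ring
  simp_rw [e]
  rw [integral_add (hT.mul_const _) hi, integral_mul_const, hT1, one_mul]
  unfold Pmala
  congr 2
  ext q'
  ring

lemma abs_Pmala_le {n : ℕ} {V : En n → ℝ} (hV : ContDiff ℝ (⊤ : ℕ∞) V) {dt : ℝ} (hdt : 0 < dt)
    {f : En n → ℝ} (hf : Measurable f) (hb : ∀ x, |f x| ≤ 1) (q : En n) :
    |Pmala V dt f q| ≤ 1 := by
  rw [Pmala_eq hV hdt hf hb]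
  refine abs_integral_Tker_le V hdt q fun x => ?_
  have h0 := Rk_nonneg V hdt q x
  have h1 := Rk_le_one V dt q x
  have := abs_le.1 (hb x)
  have := abs_le.1 (hb q)
  exact abs_le.2 ⟨by nlinarith, by nlinarith⟩

/-- The two schemes differ only upon rejection. -/
lemma one_step {n : ℕ} {V : En n → ℝ} (hV : ContDiff ℝ (⊤ : ℕ∞) V) {dt : ℝ} (hdt : 0 < dt)
    {f : En n → ℝ} (hf : Measurable f) (hb : ∀ x, |f x| ≤ 1) (q : En n) :
    |Pmala V dt f q - Pem V dt f q| ≤ 2 * ∫ q', (1 - Rk V dt q q') * Tker V dt q q' := by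
  have hRm : Measurable (Rk V dt q) := (measurable_Rk hV dt).comp measurable_prodMk_left
  have hR : ∀ x, |1 - Rk V dt q x| ≤ 1 := fun x =>
    abs_le.2 ⟨by linarith [Rk_le_one V dt q x], by linarith [Rk_nonneg V hdt q x]⟩
  have hi : Integrable (fun q' => Tker V dt q q' *
      (Rk V dt q q' * f q' + (1 - Rk V dt q q') * f q)) := by
    refine integrable_mul_Tker V hdt q (by fun_prop) (c := 1) fun x => ?_
    have h0 := Rk_nonneg V hdt q x
    have h1 := Rk_le_one V dt q x
    have := abs_le.1 (hb x)
    have := abs_le.1 (hb q)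
    exact abs_le.2 ⟨by nlinarith, by nlinarith⟩
  have hj : Integrable (fun q' => (1 - Rk V dt q q') * Tker V dt q q') := by
    simpa only [mul_comm] using
      integrable_mul_Tker V hdt q (g := fun q' => 1 - Rk V dt q q') (by fun_prop) hR
  rw [Pmala_eq hV hdt hf hb, Pem, ← integral_sub hi (integrable_mul_Tker V hdt q hf hb),
    ← integral_const_mul, ← Real.norm_eq_abs]
  refine norm_integral_le_of_norm_le (hj.const_mul 2) (.of_forall fun x => ?_)
  have e : Tker V dt q x * (Rk V dt q x * f x + (1 - Rk V dt q x) * f q) - Tker V dt q x * f x =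
      (1 - Rk V dt q x) * Tker V dt q x * (f q - f x) := by ring
  have hp : 0 ≤ (1 - Rk V dt q x) * Tker V dt q x :=
    mul_nonneg (sub_nonneg.2 (Rk_le_one V dt q x)) (Tker_pos V hdt q x).le
  rw [e, Real.norm_eq_abs, abs_mul, abs_of_nonneg hp, mul_comm]
  exact mul_le_mul_of_nonneg_right ((abs_sub _ _).trans (by linarith [hb x, hb q])) hp

/-! ### Accumulation over the steps -/

/-- The one-step errors add up, since the Euler–Maruyama operator is a sup-norm contraction. -/
lemma iterate_bound {n : ℕ} {V : En n → ℝ} (hV : ContDiff ℝ (⊤ : ℕ∞) V) {dt : ℝ} (hdt : 0 < dt)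
    {ε : ℝ} (hε : ∀ q, 2 * ∫ q', (1 - Rk V dt q q') * Tker V dt q q' ≤ ε)
    {φ : En n → ℝ} (hφ : Measurable φ) (hb : ∀ x, |φ x| ≤ 1) (k : ℕ) :
    (Measurable ((Pmala V dt)^[k] φ) ∧ ∀ x, |(Pmala V dt)^[k] φ x| ≤ 1) ∧
    (Measurable ((Pem V dt)^[k] φ) ∧ ∀ x, |(Pem V dt)^[k] φ x| ≤ 1) ∧
    ∀ x, |(Pmala V dt)^[k] φ x - (Pem V dt)^[k] φ x| ≤ k * ε := by
  induction k with
  | zero => exact ⟨⟨hφ, hb⟩, ⟨hφ, hb⟩, by simp⟩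
  | succ k ih =>
    obtain ⟨⟨hm, hmb⟩, ⟨he, heb⟩, hd⟩ := ih
    simp only [Function.iterate_succ_apply']
    refine ⟨⟨measurable_Pmala hV dt hm, abs_Pmala_le hV hdt hm hmb⟩,
      ⟨measurable_Pem hV dt he, fun x => abs_integral_Tker_le V hdt x heb⟩, fun x => ?_⟩
    set f := (Pmala V dt)^[k] φ
    set g := (Pem V dt)^[k] φ
    have h1 := (one_step hV hdt hm hmb x).trans (hε x)
    have h2 : |Pem V dt f x - Pem V dt g x| ≤ k * ε := by
      unfold Pem
      rw [← integral_sub (integrable_mul_Tker V hdt x hm hmb) (integrable_mul_Tker V hdt x he heb)]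
      simp_rw [← mul_sub]
      exact abs_integral_Tker_le V hdt x hd
    calc |Pmala V dt f x - Pem V dt g x|
        ≤ |Pmala V dt f x - Pem V dt f x| + |Pem V dt f x - Pem V dt g x| :=
          abs_sub_le _ _ _
      _ ≤ ε + k * ε := add_le_add h1 h2
      _ = ((k + 1 : ℕ) : ℝ) * ε := by push_cast; ring

theorem stmt18 (n : ℕ) (hn : 1 ≤ n) (L : ℝ) (hL : 0 < L)
    (V : En n → ℝ) (hV : ContDiff ℝ (⊤ : ℕ∞) V)
    (hper : ∀ (q : En n) (i : Fin n), V (q + L • EuclideanSpace.single i (1 : ℝ)) = V q) :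
    ∃ C ≥ (0 : ℝ), ∃ dts > (0 : ℝ), ∀ dt : ℝ, 0 < dt → dt ≤ dts → ∀ q : En n,
      ∀ φ : En n → ℝ, Measurable φ →
        (∀ (x : En n) (i : Fin n), φ (x + L • EuclideanSpace.single i (1 : ℝ)) = φ x) →
        (∀ x : En n, |φ x| ≤ 1) →
        |(Pmala V dt)^[⌊1 / dt⌋₊] φ q - (Pem V dt)^[⌊1 / dt⌋₊] φ q| ≤
          C * Real.sqrt dt := by
  obtain ⟨C, hC, h⟩ := rejection_bound_periodic hL hV hper
  refine ⟨2 * C, by positivity, 1, one_pos, fun dt hdt hdt1 q φ hφ _ hb => ?_⟩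
  refine ((iterate_bound hV hdt (ε := 2 * (C * (dt * Real.sqrt dt)))
    (fun q => by linarith [h dt hdt hdt1 q]) hφ hb ⌊1 / dt⌋₊).2.2 q).trans ?_
  calc (⌊1 / dt⌋₊ : ℝ) * (2 * (C * (dt * Real.sqrt dt)))
      ≤ 1 / dt * (2 * (C * (dt * Real.sqrt dt))) := by
        gcongr
        exact Nat.floor_le (by positivity)
    _ = 2 * C * Real.sqrt dt := by field_simp
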